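/- Let 0 < v ≤ 1/2 and 0 < ρ < 1. Let W = (W¹, W²) where W¹, W² are independent centered normal random variables with variance ρ/(1−ρ). For w ∈ ℝ² define g_w(v) = P(|Y| ≤ √(v/(1−v))·|X|) where X ~ N(w¹,1), Y ~ N(w²,1) are independent. Then P(g_W(v) > 1/2) > (1/(2π))·√(v/(1−v))·e^{−(8(1−ρ)/ρ)·((1−v)/v)}. -/

import Mathlib

open MeasureTheory ProbabilityTheory Real

noncomputable section

/-- `g_w(v)`: the probability that a 2-dimensional Gaussian with mean `w = (w¹,w²)` and identity
covariance lies in the double cone `A_v = {(x,y) : |y| ≤ √(v/(1-v))·|x|}`. -/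
def gCone (w1 w2 v : ℝ) : ℝ :=
  (((gaussianReal w1 1).prod (gaussianReal w2 1))
      {p : ℝ × ℝ | |p.2| ≤ √(v / (1 - v)) * |p.1|}).toReal

open Set Filter Topology in
lemma polar_lower (s : NNReal) (hs : s ≠ 0) (I J : Set ℝ) (S : Set (ℝ × ℝ))
    (hI : MeasurableSet I) (hJ : MeasurableSet J) (hS : MeasurableSet S)
    (hI0 : I ⊆ Ioi 0) (hJ0 : J ⊆ Ioo (-π) π)
    (h : ∀ r ∈ I, ∀ θ ∈ J, (r * cos θ, r * sin θ) ∈ S) :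
    (∫⁻ r in I, ENNReal.ofReal (r / s * exp (-r ^ 2 / (2 * s)))) *
      (ENNReal.ofReal (1 / (2 * π)) * volume J)
      ≤ ((gaussianReal 0 s).prod (gaussianReal 0 s)) S := by
  have hs0 : (0 : ℝ) < s := by positivity
  rw [gaussianReal_of_var_ne_zero _ hs,
    prod_withDensity (measurable_gaussianPDF 0 s) (measurable_gaussianPDF 0 s),
    withDensity_apply _ hS, ← Measure.volume_eq_prod, ← lintegral_indicator hS,
    ← lintegral_comp_polarCoord_symm]
  have hsub : I ×ˢ J ⊆ polarCoord.target := by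
    rintro ⟨r, θ⟩ ⟨hr, hθ⟩
    exact ⟨hI0 hr, hJ0 hθ⟩
  refine le_trans ?_ (lintegral_mono_set hsub)
  have : ∫⁻ p in I ×ˢ J, ENNReal.ofReal p.1 • (S.indicator
        (fun z : ℝ × ℝ => gaussianPDF 0 s z.1 * gaussianPDF 0 s z.2)) (polarCoord.symm p)
      = ∫⁻ p in I ×ˢ J, ENNReal.ofReal (p.1 / s * exp (-p.1 ^ 2 / (2 * s))) *
          (fun _ => ENNReal.ofReal (1 / (2 * π))) p.2 := by
    refine setLIntegral_congr_fun (hI.prod hJ) ?_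
    rintro ⟨r, θ⟩ ⟨hr, hθ⟩
    have hr0 : 0 < r := hI0 hr
    have hm := h r hr θ hθ
    simp only [polarCoord_symm_apply, indicator_of_mem hm, smul_eq_mul, gaussianPDF]
    rw [← ENNReal.ofReal_mul (gaussianPDFReal_nonneg _ _ _), ← ENNReal.ofReal_mul hr0.le,
      ← ENNReal.ofReal_mul (by positivity)]
    congr 1
    simp only [gaussianPDFReal, sub_zero]
    have e1 : exp (-(r * cos θ) ^ 2 / (2 * s)) * exp (-(r * sin θ) ^ 2 / (2 * s))
        = exp (-r ^ 2 / (2 * s)) := by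
      rw [← exp_add]
      congr 1
      have := sin_sq_add_cos_sq θ
      rw [← add_div]
      congr 1
      linear_combination (-r^2) * this
    have e2 : (√(2 * π * s))⁻¹ * (√(2 * π * s))⁻¹ = 1 / (2 * π * s) := by
      rw [← mul_inv, mul_self_sqrt (by positivity), one_div]
    rw [← e1]
    calc _ = r * ((√(2 * π * s))⁻¹ * (√(2 * π * s))⁻¹) *
          (exp (-(r * cos θ) ^ 2 / (2 * s)) * exp (-(r * sin θ) ^ 2 / (2 * s))) := by ring
      _ = _ := by rw [e2]; field_simp
  rw [this, Measure.volume_eq_prod, ← Measure.prod_restrict,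
    lintegral_prod_mul (f := fun r : ℝ => ENNReal.ofReal (r / s * exp (-r ^ 2 / (2 * s))))
      (g := fun _ : ℝ => ENNReal.ofReal (1 / (2 * π))) (by fun_prop) (by fun_prop)]
  simp

lemma hasDeriv_radial (s : ℝ) (hs : 0 < s) (r : ℝ) :
    HasDerivAt (fun r : ℝ => -exp (-r ^ 2 / (2 * s))) (r / s * exp (-r ^ 2 / (2 * s))) r := by
  have := (((hasDerivAt_pow 2 r).neg.div_const (2 * s)).exp).neg
  convert! this using 1
  simp
  field_simp

open Set Filter Topology in
lemma radial_Ioi (s : ℝ) (hs : 0 < s) (R : ℝ) (hR : 0 ≤ R) :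
    ∫⁻ r in Ioi R, ENNReal.ofReal (r / s * exp (-r ^ 2 / (2 * s)))
      = ENNReal.ofReal (exp (-R ^ 2 / (2 * s))) := by
  have hd : ∀ x ∈ Ici R, HasDerivAt (fun r : ℝ => -exp (-r ^ 2 / (2 * s)))
      (x / s * exp (-x ^ 2 / (2 * s))) x := fun x _ => hasDeriv_radial s hs x
  have hp : ∀ x ∈ Ioi R, 0 ≤ x / s * exp (-x ^ 2 / (2 * s)) := by
    intro x hx
    have : 0 < x := lt_of_le_of_lt hR hx
    positivity
  have ht : Tendsto (fun r : ℝ => -exp (-r ^ 2 / (2 * s))) atTop (𝓝 0) := by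
    rw [← neg_zero]
    refine (tendsto_exp_atBot.comp ?_).neg
    refine Tendsto.atBot_div_const (by positivity) ?_
    exact tendsto_neg_atTop_atBot.comp (tendsto_pow_atTop (by norm_num))
  have hi := integrableOn_Ioi_deriv_of_nonneg' hd hp ht
  rw [← ofReal_integral_eq_lintegral_ofReal hi
    ((ae_restrict_iff' measurableSet_Ioi).2 (ae_of_all _ hp)),
    integral_Ioi_of_hasDerivAt_of_tendsto' hd hi ht]
  simp

open Set Filter Topology in
lemma radial_Ioc (s : ℝ) (hs : 0 < s) (R : ℝ) (hR : 0 ≤ R) :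
    ∫⁻ r in Ioc 0 R, ENNReal.ofReal (r / s * exp (-r ^ 2 / (2 * s)))
      = ENNReal.ofReal (1 - exp (-R ^ 2 / (2 * s))) := by
  have hp : ∀ x ∈ Ioc 0 R, 0 ≤ x / s * exp (-x ^ 2 / (2 * s)) := by
    intro x hx
    have : 0 < x := hx.1
    positivity
  have hc : Continuous (fun x : ℝ => x / s * exp (-x ^ 2 / (2 * s))) := by fun_prop
  have hi := (hc.intervalIntegrable (μ := volume) 0 R)
  rw [← ofReal_integral_eq_lintegral_ofReal
    ((intervalIntegrable_iff_integrableOn_Ioc_of_le hR).1 hi)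
    ((ae_restrict_iff' measurableSet_Ioc).2 (ae_of_all _ hp)),
    ← intervalIntegral.integral_of_le hR,
    intervalIntegral.integral_eq_sub_of_hasDerivAt (fun x _ => hasDeriv_radial s hs x) hi]
  congr 1
  simp
  ring

open Set in
lemma disc_bound :
    ENNReal.ofReal (1 / 2) < ((gaussianReal 0 1).prod (gaussianReal 0 1))
      {p : ℝ × ℝ | p.1 ^ 2 + p.2 ^ 2 ≤ 2} := by
  refine lt_of_lt_of_le ?_ (polar_lower 1 one_ne_zero (Ioc 0 √2) (Ioo (-π) π) _
    measurableSet_Ioc measurableSet_Ioo ?_ (fun x hx => hx.1) subset_rfl ?_)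
  · have := radial_Ioc 1 one_pos √2 (by positivity)
    rw [NNReal.coe_one, this, Real.volume_Ioo, ← ENNReal.ofReal_mul (by positivity)]
    have e : 1 / (2 * π) * (π - -π) = 1 := by field_simp; ring
    rw [e, ENNReal.ofReal_one, mul_one]
    have h2 : -√2 ^ 2 / (2 * 1) = -1 := by
      rw [Real.sq_sqrt (by norm_num)]; norm_num
    rw [h2]
    have h3 : exp (-1) < 1 / 2 := by
      rw [exp_neg, ← one_div]
      exact one_div_lt_one_div_of_lt (by norm_num) exp_one_gt_two
    rw [ENNReal.ofReal_lt_ofReal_iff] <;> linarith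
  · exact measurableSet_le (by fun_prop) (by fun_prop)
  · intro r hr θ _
    have h1 : r ^ 2 ≤ 2 := by
      rw [← Real.le_sqrt hr.1.le (by norm_num)]; exact hr.2
    have := sin_sq_add_cos_sq θ
    show (r * cos θ) ^ 2 + (r * sin θ) ^ 2 ≤ 2
    have e : (r * cos θ) ^ 2 + (r * sin θ) ^ 2 = r ^ 2 := by linear_combination r ^ 2 * this
    linarith

lemma gCone_gt (v w1 w2 : ℝ) (hk : √(v / (1 - v)) ≤ 1)
    (h : |w2| ≤ √(v / (1 - v)) * |w1| - 2) : 1 / 2 < gCone w1 w2 v := by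
  unfold gCone
  set k := √(v / (1 - v)) with hkdef
  have hk0 : 0 ≤ k := Real.sqrt_nonneg _
  rw [← ENNReal.ofReal_lt_iff_lt_toReal (by norm_num) (measure_ne_top _ _)]
  refine lt_of_lt_of_le disc_bound ?_
  have e1 : gaussianReal w1 1 = (gaussianReal 0 1).map (· + w1) := by
    rw [gaussianReal_map_add_const, zero_add]
  have e2 : gaussianReal w2 1 = (gaussianReal 0 1).map (· + w2) := by
    rw [gaussianReal_map_add_const, zero_add]
  rw [e1, e2, Measure.map_prod_map _ _ (by fun_prop) (by fun_prop),
    Measure.map_apply (by fun_prop) (measurableSet_le (by fun_prop) (by fun_prop))]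
  refine measure_mono ?_
  rintro ⟨x, y⟩ hxy
  have hxy : x ^ 2 + y ^ 2 ≤ 2 := hxy
  show |y + w2| ≤ k * |x + w1|
  have a1 : |x| + |y| ≤ 2 := by
    rw [← sq_abs x, ← sq_abs y] at hxy
    nlinarith [sq_nonneg (|x| - |y|), abs_nonneg x, abs_nonneg y]
  have a2 := abs_add_le y w2
  have a3 : |w1| ≤ |x + w1| + |x| := by
    have := abs_sub (x + w1) x
    simpa using this
  have a4 := mul_le_mul_of_nonneg_left a3 hk0
  have a5 := mul_le_mul_of_nonneg_right hk (abs_nonneg x)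
  linarith

lemma cone_ineq (k r c s' : ℝ) (hk0 : 0 < k) (hr : 4 / k < r)
    (hs : |s'| ≤ k * |c| - k / 2) : |r * s'| ≤ k * |r * c| - 2 := by
  have h4 : 0 < 4 / k := by positivity
  have hr0 : 0 < r := h4.trans hr
  rw [abs_mul, abs_mul, abs_of_pos hr0]
  have h1 := mul_le_mul_of_nonneg_left hs hr0.le
  have h2 : 4 < r * k := by rwa [div_lt_iff₀ hk0] at hr
  nlinarith

lemma angle_ineq (k θ : ℝ) (hk0 : 0 < k) (hk : k ≤ 1) (h : |θ| ≤ 3 * k / 8) :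
    |sin θ| ≤ k * |cos θ| - k / 2 := by
  have h1 : |sin θ| ≤ |θ| := abs_sin_le_abs
  have h2 := one_sub_sq_div_two_le_cos (x := θ)
  have h3 : θ ^ 2 ≤ (3 / 8) ^ 2 := by
    rw [← sq_abs]
    exact pow_le_pow_left₀ (abs_nonneg _) (by linarith) 2
  have h4 : 7 / 8 ≤ |cos θ| := le_trans (by norm_num at h3 ⊢; linarith) (le_abs_self _)
  nlinarith

open Set in
theorem prob_cone (s : NNReal) (hs : s ≠ 0) (k : ℝ) (hk0 : 0 < k) (hk : k ≤ 1) :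
    ENNReal.ofReal (exp (-(4 / k) ^ 2 / (2 * s)) * (1 / (2 * π) * (9 * k / 8)))
      ≤ ((gaussianReal 0 s).prod (gaussianReal 0 s))
        {p : ℝ × ℝ | |p.2| ≤ k * |p.1| - 2} := by
  have h4 : 0 < 4 / k := by positivity
  have hs0 : (0 : ℝ) < s := by positivity
  have hpi := pi_gt_three
  have hdisj : Disjoint (Ioo (-(3 * k / 8)) (3 * k / 8)) (Ioo (π - 3 * k / 8) π) := by
    rw [Set.disjoint_left]
    intro x hx hy
    linarith [hx.2, hy.1]
  have hvol : volume (Ioo (-(3 * k / 8)) (3 * k / 8) ∪ Ioo (π - 3 * k / 8) π)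
      = ENNReal.ofReal (9 * k / 8) := by
    rw [measure_union hdisj measurableSet_Ioo, Real.volume_Ioo, Real.volume_Ioo,
      ← ENNReal.ofReal_add (by linarith) (by linarith)]
    congr 1
    ring
  have := polar_lower s hs (Ioi (4 / k))
    (Ioo (-(3 * k / 8)) (3 * k / 8) ∪ Ioo (π - 3 * k / 8) π)
    {p : ℝ × ℝ | |p.2| ≤ k * |p.1| - 2} measurableSet_Ioi
    (measurableSet_Ioo.union measurableSet_Ioo)
    (measurableSet_le (by fun_prop) (by fun_prop)) (fun x hx => h4.trans hx)
    (by
      rintro x (hx | hx)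
      · exact ⟨by linarith [hx.1], by linarith [hx.2]⟩
      · exact ⟨by linarith [hx.1], by linarith [hx.2]⟩)
    (by
      rintro r hr θ (hθ | hθ)
      · refine cone_ineq k r (cos θ) (sin θ) hk0 hr (angle_ineq k θ hk0 hk ?_)
        exact abs_le.2 ⟨hθ.1.le, hθ.2.le⟩
      · refine cone_ineq k r (cos θ) (sin θ) hk0 hr ?_
        have := angle_ineq k (π - θ) hk0 hk
          (abs_le.2 ⟨by linarith [hθ.2], by linarith [hθ.1]⟩)
        rwa [sin_pi_sub, cos_pi_sub, abs_neg] at this)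
  rwa [hvol, radial_Ioi s hs0 _ h4.le, ← ENNReal.ofReal_mul (by positivity),
    ← ENNReal.ofReal_mul (by positivity)] at this

/-- for `0 < v ≤ 1/2`, `0 < ρ < 1` and `W = (W¹,W²)` a pair of independent centered
normals with variance `ρ/(1-ρ)`,
`P(g_W(v) > 1/2) > (1/(2π))·√(v/(1-v))·exp(-(8(1-ρ)/ρ)·((1-v)/v))`. -/
theorem prob_gCone_gt_half (v ρ : ℝ) (hv0 : 0 < v) (hv : v ≤ 1 / 2)
    (hρ0 : 0 < ρ) (hρ1 : ρ < 1) :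
    ENNReal.ofReal
        (1 / (2 * π) * √(v / (1 - v)) * exp (-(8 * (1 - ρ) / ρ) * ((1 - v) / v)))
      < ((gaussianReal 0 (Real.toNNReal (ρ / (1 - ρ)))).prod
            (gaussianReal 0 (Real.toNNReal (ρ / (1 - ρ)))))
          {w : ℝ × ℝ | 1 / 2 < gCone w.1 w.2 v} := by
  have h1v : 0 < 1 - v := by linarith
  have h1ρ : 0 < 1 - ρ := by linarith
  have hs0 : 0 < ρ / (1 - ρ) := by positivity
  have hq : 0 < v / (1 - v) := by positivity
  have hk0 : 0 < √(v / (1 - v)) := Real.sqrt_pos.2 hq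
  have hk1 : √(v / (1 - v)) ≤ 1 := by
    rw [Real.sqrt_le_one, div_le_one h1v]
    linarith
  have hs : Real.toNNReal (ρ / (1 - ρ)) ≠ 0 := (Real.toNNReal_pos.2 hs0).ne'
  refine lt_of_lt_of_le ?_ ((prob_cone _ hs _ hk0 hk1).trans
    (measure_mono fun p hp => gCone_gt v p.1 p.2 hk1 hp))
  rw [Real.coe_toNNReal _ hs0.le]
  have e : -(4 / √(v / (1 - v))) ^ 2 / (2 * (ρ / (1 - ρ)))
      = -(8 * (1 - ρ) / ρ) * ((1 - v) / v) := by
    rw [div_pow, Real.sq_sqrt hq.le]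
    field_simp
    ring
  rw [e, ENNReal.ofReal_lt_ofReal_iff (by positivity)]
  set E := exp (-(8 * (1 - ρ) / ρ) * ((1 - v) / v))
  have hE : 0 < E := exp_pos _
  have : 0 < 1 / (2 * π) * √(v / (1 - v)) * E := by positivity
  linarith

end
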